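/- Let λ₁, λ₂, λ₃ : ℝ → ℝ be functions, each differentiable at 0, and suppose there is an open interval I containing 0 such that for every ε ∈ I: λ₁(ε)·λ₂(ε)·λ₃(ε) = 1 + ε, λ₁(ε) + λ₂(ε) + λ₃(ε) = 5 + ε, and λ₁(ε)·λ₂(ε) + λ₁(ε)·λ₃(ε) + λ₂(ε)·λ₃(ε) = 6 + 3ε. If 1 < λ₂(0) < 2, then λ₂′(0) ≠ 0. -/

import Mathlib

/-- Gogolev–Kolmogorov–Maimon dissipative family: if three functions, differentiable
at `0`, satisfy the elementary symmetric relations `λ₁λ₂λ₃ = 1 + ε`,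
`λ₁ + λ₂ + λ₃ = 5 + ε`, `λ₁λ₂ + λ₁λ₃ + λ₂λ₃ = 6 + 3ε` on an open interval around `0`,
and `1 < λ₂(0) < 2`, then `λ₂′(0) ≠ 0`. -/
theorem stmt14 (l1 l2 l3 : ℝ → ℝ)
    (h1 : DifferentiableAt ℝ l1 0) (h2 : DifferentiableAt ℝ l2 0)
    (h3 : DifferentiableAt ℝ l3 0)
    (δ : ℝ) (hδ : 0 < δ)
    (hprod : ∀ ε ∈ Set.Ioo (-δ) δ, l1 ε * l2 ε * l3 ε = 1 + ε)
    (hsum : ∀ ε ∈ Set.Ioo (-δ) δ, l1 ε + l2 ε + l3 ε = 5 + ε)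
    (hsym : ∀ ε ∈ Set.Ioo (-δ) δ,
      l1 ε * l2 ε + l1 ε * l3 ε + l2 ε * l3 ε = 6 + 3 * ε)
    (hl2 : l2 0 ∈ Set.Ioo (1:ℝ) 2) :
    deriv l2 0 ≠ 0 := by
  intro hd
  have hx : HasDerivAt l2 0 0 := by
    have := h2.hasDerivAt
    rwa [hd] at this
  have hid : HasDerivAt (fun e : ℝ => e) 1 0 := hasDerivAt_id 0
  -- the characteristic polynomial at `l2 ε` vanishes near `0`
  have hg := (((hx.pow 3).sub ((hid.const_add 5).mul (hx.pow 2))).add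
    (((hid.const_mul 3).const_add 6).mul hx)).sub (hid.const_add 1)
  have hz := (hasDerivAt_const (0:ℝ) (0:ℝ)).congr_of_eventuallyEq
    (f₁ := _) (f := _) (show _ =ᶠ[nhds (0:ℝ)] _ from by
      filter_upwards [Ioo_mem_nhds (neg_lt_zero.mpr hδ) hδ] with e he
      have a := hprod e he
      have b := hsum e he
      have c := hsym e he
      show (l2 e ^ 3 - (5 + e) * l2 e ^ 2 + (6 + 3 * e) * l2 e) - (1 + e) = 0
      rw [← a, ← b, ← c]
      ring)
  have hu := hg.unique hz
  simp at hu
  obtain ⟨ha, hb⟩ := hl2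
  nlinarith [mul_pos (sub_pos.mpr ha) (sub_pos.mpr hb)]
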